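/- Let 𝒯 be a rooted tree with a distinguished leaf v_*. Then the bivariate polynomial p_{v_*}[𝒯](x,y) has the form p_{v_*}[𝒯](x,y) = a_1(x)·y + a_2(x) for polynomials a_1, a_2 ∈ ℤ[x]. Moreover, if 𝒯 has at least two leaves (equivalently, 𝒯 is not a path with the root at one end and v_* at the other), then sup_{x ∈ [0,1]} |a_1(x)| < 1; consequently the map A : C[0,1] → C[0,1], A(f)(x) = a_1(x)·f(x) + a_2(x), is a strict contraction with respect to the maximum norm. -/

import Mathlib

/-- A rooted tree: a finite tree with a distinguished root vertex, given by the (ordered)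
list of subtrees rooted at the children of the root. -/
inductive RTree : Type where
  | node : List RTree → RTree

namespace RTree

mutual
/-- The tree polynomial `p[𝒯] ∈ ℤ[x]`: `p = x` for a single vertex, and
`p[𝒯] = x (1 − ∏ᵢ (1 − p[𝒯ᵢ]))` when the subtrees rooted at the children of the root are
`𝒯₁, …, 𝒯ᵣ`. -/
noncomputable def treePoly : RTree → Polynomial ℤ
  | .node [] => Polynomial.X
  | .node (t :: ts) => Polynomial.X * (1 - prodPoly (t :: ts))
  termination_by t => sizeOf t

/-- `∏ᵢ (1 − p[𝒯ᵢ])` over a list of trees. -/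
noncomputable def prodPoly : List RTree → Polynomial ℤ
  | [] => 1
  | t :: ts => (1 - treePoly t) * prodPoly ts
  termination_by l => sizeOf l
end

mutual
/-- The set of vertex addresses of a rooted tree: a vertex is addressed by the list of
child indices on the path from the root to it (so the root has address `[]`). -/
def vertexFinset : RTree → Finset (List ℕ)
  | .node ts => insert [] (childVerts ts 0)
  termination_by t => sizeOf t

def childVerts : List RTree → ℕ → Finset (List ℕ)
  | [], _ => ∅
  | t :: ts, i => (vertexFinset t).image (List.cons i) ∪ childVerts ts (i + 1)
  termination_by l _ => sizeOf l
end

mutual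
/-- The subtree rooted at a given vertex address, if the address is valid. -/
def subtreeAt : RTree → List ℕ → Option RTree
  | t, [] => some t
  | .node ts, i :: l => subtreeAtAux ts i l
  termination_by t _ => sizeOf t

def subtreeAtAux : List RTree → ℕ → List ℕ → Option RTree
  | [], _, _ => none
  | t :: _, 0, l => subtreeAt t l
  | _ :: ts, i + 1, l => subtreeAtAux ts i l
  termination_by l _ _ => sizeOf l
end

/-- Whether a tree consists of a single vertex (i.e. its root is a leaf). -/
def isLeafTree : RTree → Bool
  | .node [] => true
  | .node (_ :: _) => false

/-- The set of (addresses of) leaves of a rooted tree: vertices with no children. -/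
def leafFinset (t : RTree) : Finset (List ℕ) :=
  (vertexFinset t).filter (fun l => (subtreeAt t l).any isLeafTree = true)

/-- The set of all prefixes of an address: the set of vertices of the path from the root
to the vertex with this address. -/
def prefixFinset (l : List ℕ) : Finset (List ℕ) :=
  (Finset.range (l.length + 1)).image (fun k => l.take k)

end RTree

namespace RTree

/-- Pass a distinguished address into the `i`-th child: `some (j :: rest)` becomes
`some rest` when `j = i` and `none` otherwise. -/
def childAddr (l : Option (List ℕ)) (i : ℕ) : Option (List ℕ) :=
  match l with
  | some (j :: rest) => if j = i then some rest else none
  | _ => none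

mutual
/-- The bivariate tree polynomial `p_{v_*}[𝒯](x, y) ∈ (ℤ[x])[y]` with a distinguished
leaf address: the distinguished leaf is initialised with `y` (the outer variable `X`),
every other leaf with `x` (the constant `C X`), and
`p_{v_*}[w] = x (1 − ∏ᵢ (1 − p_{v_*}[wᵢ]))` at a vertex `w` with children `w₁, …, wᵣ`. -/
noncomputable def treePoly2 : RTree → Option (List ℕ) → Polynomial (Polynomial ℤ)
  | .node [], l => if l = some [] then Polynomial.X else Polynomial.C Polynomial.X
  | .node (t :: ts), l => Polynomial.C Polynomial.X * (1 - prodPoly2 (t :: ts) l 0)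
  termination_by t _ => sizeOf t

noncomputable def prodPoly2 : List RTree → Option (List ℕ) → ℕ → Polynomial (Polynomial ℤ)
  | [], _, _ => 1
  | t :: ts, l, i => (1 - treePoly2 t (childAddr l i)) * prodPoly2 ts l (i + 1)
  termination_by ts _ _ => sizeOf ts
end

end RTree

/-!
Each vertex has at most one child through which the path to `v_*` passes, so `y` enters each
product at most once and `p` is affine in `y`; hence `a₁(x) = p(x, 1) - p(x, 0)`.

For `x, y ∈ [0, 1]` all values of `p` lie in `[0, 1]`, and if some leaf differs from `v_*`, then
`0 ≤ p(x, y) ≤ x`, so `|a₁(x)| ≤ x < 1` for `x < 1`. At `x = 1` such a leaf has value `1`, and the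
value `1` propagates along the path to the root because it kills the product of the factors
`1 - p`; therefore `p(1, 1) = p(1, 0) = 1` and `a₁(1) = 0`.
-/

theorem mul_one_sub_prod_one_sub_mem_Icc {R ι : Type*} [CommRing R] [PartialOrder R]
    [IsOrderedRing R] {s : Finset ι} {f : ι → R} {x : R} (hx : 0 ≤ x)
    (hf : ∀ i ∈ s, f i ∈ Set.Icc 0 1) :
    x * (1 - ∏ i ∈ s, (1 - f i)) ∈ Set.Icc 0 x := by
  have hsub : ∀ i ∈ s, 1 - f i ∈ Set.Icc 0 1 := fun i hi => Set.Icc.one_sub_mem (hf i hi)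
  have hprod : ∏ i ∈ s, (1 - f i) ∈ Set.Icc 0 1 :=
    ⟨Finset.prod_nonneg fun i hi => (hsub i hi).1,
      Finset.prod_le_one (fun i hi => (hsub i hi).1) fun i hi => (hsub i hi).2⟩
  have hone_sub := Set.Icc.one_sub_mem hprod
  exact ⟨mul_nonneg hx hone_sub.1, mul_le_of_le_one_right hx hone_sub.2⟩

open Polynomial in
theorem aeval_coeff_one_eq_aevalAeval_sub {R A : Type*} [CommSemiring R] [CommRing A] [Algebra R A]
    {p : R[X][X]} (hp : p.natDegree ≤ 1) (x : A) :
    aeval x (p.coeff 1) = aevalAeval x 1 p - aevalAeval x 0 p := by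
  have hval (y : A) : aevalAeval x y p = aeval x (p.coeff 1) * y + aeval x (p.coeff 0) := by
    conv_lhs => rw [eq_X_add_C_of_natDegree_le_one hp]
    simp only [map_add, map_mul, aevalAeval_C, aevalAeval_Y]
  rw [hval, hval]
  ring

theorem lipschitzWith_mul_left_add {R : Type*} [NonUnitalSeminormedRing R] (a b : R) :
    LipschitzWith ‖a‖₊ (fun f => a * f + b) := by
  simpa only [one_mul, Function.comp_def, smul_eq_mul] using
    (isometry_add_right b).lipschitz.comp (lipschitzWith_smul a)

namespace RTree

open Polynomial

theorem induction_on_children {P : RTree → Prop}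
    (node : ∀ ts : List RTree, (∀ t ∈ ts, P t) → P (.node ts)) (t : RTree) : P t := by
  match t with
  | .node ts => exact node ts fun t _ => induction_on_children node t

section Leaves

theorem subtreeAtAux_eq_bind (ts : List RTree) (i : ℕ) (v : List ℕ) :
    subtreeAtAux ts i v = ts[i]?.bind (subtreeAt · v) := by
  induction ts generalizing i with
  | nil => simp [subtreeAtAux]
  | cons t ts ih => cases i <;> simp [subtreeAtAux, ih]

theorem subtreeAt_node_cons_eq_some_iff {ts : List RTree} {i : ℕ} {v : List ℕ} {s : RTree} :
    subtreeAt (.node ts) (i :: v) = some s ↔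
      ∃ h : i < ts.length, subtreeAt ts[i] v = some s := by
  simp [subtreeAt, subtreeAtAux_eq_bind, Option.bind_eq_some_iff, List.getElem?_eq_some_iff]

theorem subtreeAt_eq_of_mem_leafFinset {t : RTree} {v : List ℕ} (hv : v ∈ leafFinset t) :
    subtreeAt t v = some (.node []) := by
  obtain ⟨s, hs, hleaf⟩ := (Option.any_eq_true _ _).mp (Finset.mem_filter.mp hv).2
  match s with
  | .node [] => exact hs
  | .node (_ :: _) => simp [isLeafTree] at hleaf

end Leaves

section Recursion

theorem prodPoly2_eq_prod (ts : List RTree) (l : Option (List ℕ)) (k : ℕ) :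
    prodPoly2 ts l k = ∏ i : Fin ts.length, (1 - treePoly2 ts[i] (childAddr l (k + i))) := by
  induction ts generalizing k with
  | nil => simp [prodPoly2]
  | cons t ts ih => simp [prodPoly2, ih, Fin.prod_univ_succ, Nat.add_assoc, Nat.add_comm 1]

theorem treePoly2_node_of_ne_nil {ts : List RTree} (hts : ts ≠ []) (l : Option (List ℕ)) :
    treePoly2 (.node ts) l =
      C X * (1 - ∏ i : Fin ts.length, (1 - treePoly2 ts[i] (childAddr l i))) := by
  obtain ⟨t, ts, rfl⟩ := List.exists_cons_of_ne_nil hts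
  simp only [treePoly2, prodPoly2_eq_prod, Nat.zero_add]

theorem aevalAeval_treePoly2_node_of_ne_nil {A : Type*} [CommRing A] {ts : List RTree}
    (hts : ts ≠ []) (l : Option (List ℕ)) (x y : A) :
    aevalAeval x y (treePoly2 (.node ts) l) =
      x * (1 - ∏ i : Fin ts.length,
        (1 - aevalAeval x y (treePoly2 ts[i] (childAddr l i)))) := by
  simp only [treePoly2_node_of_ne_nil hts, map_mul, map_sub, map_one, map_prod, aevalAeval_X]

end Recursion

section Degree

theorem sum_isSome_childAddr_le (l : Option (List ℕ)) (n : ℕ) :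
    ∑ i : Fin n, (childAddr l i).isSome.toNat ≤ l.isSome.toNat := by
  rw [Fin.sum_univ_eq_sum_range fun i => (childAddr l i).isSome.toNat]
  match l with
  | none | some [] => simp [childAddr]
  | some (j :: v) =>
    have hsome (i : ℕ) : (childAddr (some (j :: v)) i).isSome.toNat = if j = i then 1 else 0 := by
      by_cases h : j = i <;> simp [childAddr, h]
    simp only [hsome, Finset.sum_ite_eq, Option.isSome_some, Bool.toNat_true]
    split_ifs <;> simp

theorem natDegree_treePoly2_le (t : RTree) (l : Option (List ℕ)) :
    (treePoly2 t l).natDegree ≤ l.isSome.toNat := by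
  induction t using induction_on_children generalizing l with
  | node ts ih =>
    rcases eq_or_ne ts [] with rfl | hts
    · by_cases hl : l = some [] <;> simp [treePoly2, hl]
    · have hfactor (i : Fin ts.length) :
          (1 - treePoly2 ts[i] (childAddr l i)).natDegree ≤ (childAddr l i).isSome.toNat :=
        (natDegree_sub_le_of_le natDegree_one.le (ih _ (List.getElem_mem _) _)).trans
          (by simp)
      rw [treePoly2_node_of_ne_nil hts]
      calc (C X * (1 - ∏ i : Fin ts.length, (1 - treePoly2 ts[i] (childAddr l i)))).natDegree
          ≤ (1 - ∏ i : Fin ts.length, (1 - treePoly2 ts[i] (childAddr l i))).natDegree :=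
            natDegree_C_mul_le _ _
        _ ≤ max 0 (∏ i : Fin ts.length, (1 - treePoly2 ts[i] (childAddr l i))).natDegree :=
            natDegree_sub_le_of_le natDegree_one.le le_rfl
        _ ≤ ∑ i : Fin ts.length, (1 - treePoly2 ts[i] (childAddr l i)).natDegree := by
            simpa only [zero_le, max_eq_right] using natDegree_prod_le _ _
        _ ≤ ∑ i : Fin ts.length, (childAddr l i).isSome.toNat :=
            Finset.sum_le_sum fun i _ => hfactor i
        _ ≤ l.isSome.toNat := sum_isSome_childAddr_le l _

theorem natDegree_treePoly2_le_one (t : RTree) (l : Option (List ℕ)) :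
    (treePoly2 t l).natDegree ≤ 1 :=
  (natDegree_treePoly2_le t l).trans (Bool.toNat_le _)

end Degree

section Values

theorem aevalAeval_one_treePoly2_eq_one {A : Type*} [CommRing A] {t : RTree} {w : List ℕ}
    (hw : subtreeAt t w = some (.node [])) {l : Option (List ℕ)} (hl : l ≠ some w) (y : A) :
    aevalAeval 1 y (treePoly2 t l) = 1 := by
  induction w generalizing t l with
  | nil =>
    obtain rfl : t = .node [] := by simpa [subtreeAt] using hw
    simp [treePoly2, hl]
  | cons i w ih =>
    obtain ⟨ts⟩ := t
    obtain ⟨hi, hw⟩ := subtreeAt_node_cons_eq_some_iff.mp hw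
    have hchild : childAddr l i ≠ some w := by
      match l with
      | none | some [] => simp [childAddr]
      | some (j :: v) => simp_all [childAddr]
    have hprod : ∏ j : Fin ts.length,
        (1 - aevalAeval 1 y (treePoly2 ts[j] (childAddr l j))) = 0 :=
      Finset.prod_eq_zero (Finset.mem_univ ⟨i, hi⟩) (sub_eq_zero.mpr (ih hw hchild).symm)
    rw [aevalAeval_treePoly2_node_of_ne_nil (List.ne_nil_of_length_pos (by omega)), hprod,
      sub_zero, one_mul]

variable {R : Type*} [CommRing R] [PartialOrder R] [IsOrderedRing R]

theorem aevalAeval_treePoly2_mem_Icc_zero_one {x y : R} (hx : x ∈ Set.Icc 0 1)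
    (hy : y ∈ Set.Icc 0 1) (t : RTree) (l : Option (List ℕ)) :
    aevalAeval x y (treePoly2 t l) ∈ Set.Icc 0 1 := by
  induction t using induction_on_children generalizing l with
  | node ts ih =>
    rcases eq_or_ne ts [] with rfl | hts
    · by_cases hl : l = some [] <;> simpa [treePoly2, hl]
    · rw [aevalAeval_treePoly2_node_of_ne_nil hts]
      exact Set.Icc_subset_Icc_right hx.2 <| mul_one_sub_prod_one_sub_mem_Icc hx.1
        fun i _ => ih _ (List.getElem_mem _) _

theorem aevalAeval_treePoly2_mem_Icc_zero_self {x y : R} (hx : x ∈ Set.Icc 0 1)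
    (hy : y ∈ Set.Icc 0 1) {t : RTree} {w : List ℕ} (hw : subtreeAt t w = some (.node []))
    {l : Option (List ℕ)} (hl : l ≠ some w) :
    aevalAeval x y (treePoly2 t l) ∈ Set.Icc 0 x := by
  obtain ⟨ts⟩ := t
  rcases eq_or_ne ts [] with rfl | hts
  · obtain rfl : w = [] := by
      cases w with
      | nil => rfl
      | cons i v => simp [subtreeAt_node_cons_eq_some_iff] at hw
    simpa [treePoly2, hl] using hx.1
  · rw [aevalAeval_treePoly2_node_of_ne_nil hts]
    exact mul_one_sub_prod_one_sub_mem_Icc hx.1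
      fun i _ => aevalAeval_treePoly2_mem_Icc_zero_one hx hy _ _

end Values

theorem abs_aeval_coeff_one_treePoly2_lt_one {R : Type*} [CommRing R] [LinearOrder R]
    [IsStrictOrderedRing R] {t : RTree} {w : List ℕ}
    (hw : subtreeAt t w = some (.node [])) {l : Option (List ℕ)} (hl : l ≠ some w)
    {x : R} (hx : x ∈ Set.Icc 0 1) : |aeval x ((treePoly2 t l).coeff 1)| < 1 := by
  rw [aeval_coeff_one_eq_aevalAeval_sub (natDegree_treePoly2_le_one t l)]
  rcases hx.2.eq_or_lt with rfl | hlt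
  · simp [aevalAeval_one_treePoly2_eq_one hw hl]
  · have hone := aevalAeval_treePoly2_mem_Icc_zero_self hx ⟨zero_le_one, le_rfl⟩ hw hl
    have hzero := aevalAeval_treePoly2_mem_Icc_zero_self hx ⟨le_rfl, zero_le_one⟩ hw hl
    exact (abs_sub_le_of_nonneg_of_le hone.1 hone.2 hzero.1 hzero.2).trans_lt hlt

end RTree

/-- For a rooted tree `𝒯` with distinguished leaf `v_*`, the bivariate
polynomial `p_{v_*}[𝒯](x,y)` has the form `a₁(x) y + a₂(x)` with `a₁, a₂ ∈ ℤ[x]`; if `𝒯`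
has at least two leaves then `sup_{x ∈ [0,1]} |a₁(x)| < 1`, and consequently the map
`A : C[0,1] → C[0,1]`, `A(f)(x) = a₁(x) f(x) + a₂(x)`, is a strict contraction for the
maximum norm. -/
theorem stmt9 (t : RTree) (vstar : List ℕ) (hv : vstar ∈ RTree.leafFinset t) :
    (RTree.treePoly2 t (some vstar)
        = Polynomial.C ((RTree.treePoly2 t (some vstar)).coeff 1) * Polynomial.X
          + Polynomial.C ((RTree.treePoly2 t (some vstar)).coeff 0)) ∧
    (2 ≤ (RTree.leafFinset t).card →
      (∃ c : ℝ, c < 1 ∧ ∀ x ∈ Set.Icc (0 : ℝ) 1,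
          |Polynomial.aeval x ((RTree.treePoly2 t (some vstar)).coeff 1)| ≤ c) ∧
      ∃ c : NNReal, c < 1 ∧ LipschitzWith c
        (fun f : C(Set.Icc (0 : ℝ) 1, ℝ) =>
          ContinuousMap.mk
            (fun x : Set.Icc (0 : ℝ) 1 => Polynomial.aeval (x : ℝ) ((RTree.treePoly2 t (some vstar)).coeff 1)
                * f x
              + Polynomial.aeval (x : ℝ) ((RTree.treePoly2 t (some vstar)).coeff 0))
            (((((RTree.treePoly2 t (some vstar)).coeff 1).continuous_aeval.comp
                  continuous_subtype_val).mul f.continuous).add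
              ((((RTree.treePoly2 t (some vstar)).coeff 0).continuous_aeval.comp
                  continuous_subtype_val))))) := by
  refine ⟨Polynomial.eq_X_add_C_of_natDegree_le_one (RTree.natDegree_treePoly2_le_one _ _),
    fun hcard => ?_⟩
  obtain ⟨w, hw, hne⟩ := Finset.exists_mem_ne hcard vstar
  let a (i : ℕ) : C(Set.Icc (0 : ℝ) 1, ℝ) :=
    ⟨fun x => Polynomial.aeval (x : ℝ) ((RTree.treePoly2 t (some vstar)).coeff i),
      (Polynomial.continuous_aeval _).comp continuous_subtype_val⟩
  have hnorm : ‖a 1‖ < 1 := (ContinuousMap.norm_lt_iff _ one_pos).mpr fun x =>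
    RTree.abs_aeval_coeff_one_treePoly2_lt_one (RTree.subtreeAt_eq_of_mem_leafFinset hw)
      (Option.some_injective _ |>.ne hne.symm) x.2
  exact ⟨⟨‖a 1‖, hnorm, fun x hx => (a 1).norm_coe_le_norm ⟨x, hx⟩⟩,
    ‖a 1‖₊, hnorm, lipschitzWith_mul_left_add (a 1) (a 0)⟩
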